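/- Let l ∈ ℝ² with |l| = 1 and λ > 0 with λl ∈ ℤ². Let a ∈ C^∞(𝕋²) be real valued and set g(x) = a(x) cos(λ l·x). Then Λg = λg + (l·∇a) sin(λ l·x) + (T^{(1)}_{λl} a) cos(λ l·x) + (T^{(2)}_{λl} a) sin(λ l·x). -/

import Mathlib

open MeasureTheory Complex Filter

noncomputable section

abbrev Z2 := ℤ × ℤ

/-- dot product of an integer frequency with a point of `ℝ²` -/
def dotZ (k : Z2) (x : ℝ × ℝ) : ℝ := (k.1 : ℝ) * x.1 + (k.2 : ℝ) * x.2

/-- Euclidean norm of an integer frequency -/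
def knorm (k : Z2) : ℝ := Real.sqrt ((k.1 : ℝ) ^ 2 + (k.2 : ℝ) ^ 2)

/-- Euclidean norm on `ℝ²` (realized as `ℝ × ℝ`) -/
def e2 (x : ℝ × ℝ) : ℝ := Real.sqrt (x.1 ^ 2 + x.2 ^ 2)

/-- the fundamental domain `[-π, π]²` of the torus -/
def Q2 : Set (ℝ × ℝ) := Set.Icc (-Real.pi, -Real.pi) (Real.pi, Real.pi)

/-- `2π`-periodicity in both variables -/
def Periodic2 (f : ℝ × ℝ → ℂ) : Prop :=
  ∀ x : ℝ × ℝ, f (x.1 + 2 * Real.pi, x.2) = f x ∧ f (x.1, x.2 + 2 * Real.pi) = f x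

def RealValued (f : ℝ × ℝ → ℂ) : Prop := ∀ x, (f x).im = 0

/-- Fourier coefficient `f̂(k) = (2π)⁻² ∫_{𝕋²} f(x) e^{-ik⋅x} dx` -/
def fCoeff (f : ℝ × ℝ → ℂ) (k : Z2) : ℂ :=
  (1 / (2 * Real.pi) ^ 2 : ℂ) * ∫ x in Q2, f x * Complex.exp (-Complex.I * (dotZ k x : ℝ))

/-- Fourier multiplier operator with symbol `m` -/
def Tmult (m : Z2 → ℂ) (f : ℝ × ℝ → ℂ) : ℝ × ℝ → ℂ :=
  fun x => ∑' k : Z2, m k * fCoeff f k * Complex.exp (Complex.I * (dotZ k x : ℝ))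

/-- `Λ^s = (-Δ)^{s/2}`, the multiplier with symbol `|k|^s` (killing `k = 0` for `s ≤ 0`) -/
def Lam (s : ℝ) : (ℝ × ℝ → ℂ) → (ℝ × ℝ → ℂ) :=
  Tmult fun k => if k = 0 then 0 else ((knorm k ^ s : ℝ) : ℂ)

/-- symbol of the Riesz transform `R_j`, `i k_j / |k|` -/
def rieszSym (j : Fin 2) (k : Z2) : ℂ :=
  if k = 0 then 0
  else Complex.I * ((if j = 0 then (k.1 : ℝ) else (k.2 : ℝ)) : ℂ) / ((knorm k : ℝ) : ℂ)

/-- the Riesz transform `R_j` -/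
def Riesz (j : Fin 2) : (ℝ × ℝ → ℂ) → (ℝ × ℝ → ℂ) := Tmult (rieszSym j)

/-- symbol of the modified Riesz-type transforms `R_j^o` of Lemma 2.2 -/
def RoSym (j : Fin 2) (k : Z2) : ℝ :=
  if k = 0 then 0
  else if j = 0 then 25 * ((k.2 : ℝ) ^ 2 - (k.1 : ℝ) ^ 2) / (12 * ((k.1 : ℝ) ^ 2 + (k.2 : ℝ) ^ 2))
  else 7 * ((k.2 : ℝ) ^ 2 - (k.1 : ℝ) ^ 2) / (12 * ((k.1 : ℝ) ^ 2 + (k.2 : ℝ) ^ 2))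
      + 4 * (k.1 : ℝ) * (k.2 : ℝ) / ((k.1 : ℝ) ^ 2 + (k.2 : ℝ) ^ 2)

/-- the Riesz-type transforms `R_j^o` -/
def Ro (j : Fin 2) : (ℝ × ℝ → ℂ) → (ℝ × ℝ → ℂ) := Tmult fun k => ((RoSym j k : ℝ) : ℂ)

/-- symbol of `Δ⁻¹` (mean annihilated) -/
def deltaInvSym (k : Z2) : ℂ := if k = 0 then 0 else -1 / ((knorm k ^ 2 : ℝ) : ℂ)

/-- directional derivative `(v ⋅ ∇) f` -/
def dirD (v : ℝ × ℝ) (f : ℝ × ℝ → ℂ) : ℝ × ℝ → ℂ := fun x => fderiv ℝ f x v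

/-- partial derivative `∂_j f` -/
def pd (j : Fin 2) (f : ℝ × ℝ → ℂ) : ℝ × ℝ → ℂ :=
  dirD (if j = 0 then ((1 : ℝ), (0 : ℝ)) else ((0 : ℝ), (1 : ℝ))) f

/-- sup norm on the torus -/
def supNorm (f : ℝ × ℝ → ℂ) : ℝ := ⨆ x : ℝ × ℝ, ‖f x‖

/-- the `X`-norm `‖q‖_X = ‖q‖_∞ + ‖R₁^o q‖_∞ + ‖R₂^o q‖_∞` -/
def Xnorm (q : ℝ × ℝ → ℂ) : ℝ := supNorm q + supNorm (Ro 0 q) + supNorm (Ro 1 q)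

/-- the vectors `l₁ = (3/5, 4/5)` and `l₂ = (1,0)` -/
def l1 : ℝ × ℝ := (3 / 5, 4 / 5)
def l2 : ℝ × ℝ := (1, 0)

/-- the rotation `l ↦ l^⊥` -/
def perp (l : ℝ × ℝ) : ℝ × ℝ := (-l.2, l.1)

/-- symbol view of frequencies as real vectors -/
def toR (k : Z2) : ℝ × ℝ := ((k.1 : ℝ), (k.2 : ℝ))

/-- the operator `T^{(1)}_{λl}` (where `κ = λl ∈ ℤ²`) -/
def T1op (κ : Z2) (lam : ℝ) : (ℝ × ℝ → ℂ) → (ℝ × ℝ → ℂ) :=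
  Tmult fun k => (((knorm (κ + k) + knorm (κ - k)) / 2 - lam : ℝ) : ℂ)

/-- the operator `T^{(2)}_{λl}` (where `κ = λl ∈ ℤ²`) -/
def T2op (κ : Z2) (l : ℝ × ℝ) : (ℝ × ℝ → ℂ) → (ℝ × ℝ → ℂ) :=
  Tmult fun k =>
    Complex.I * (((knorm (κ + k) - knorm (κ - k)) / 2 - (l.1 * (k.1 : ℝ) + l.2 * (k.2 : ℝ)) : ℝ) : ℂ)

/-- the functions `a_j = 2 √(r/den) √(C₀ + R_j^o q / r)` -/
def aPerf (q : ℝ × ℝ → ℂ) (r den C₀ : ℝ) (j : Fin 2) : ℝ × ℝ → ℂ :=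
  fun x => ((2 * Real.sqrt (r / den) * Real.sqrt (C₀ + (Ro j q x).re / r) : ℝ) : ℂ)

/-- `λ_n = ⌈λ₀^{bⁿ}⌉` -/
def lamSeq (lam0 : ℕ) (b : ℝ) (n : ℕ) : ℕ := ⌈((lam0 : ℝ)) ^ (b ^ n)⌉₊

/-- `r_n = λ_n^{-β}` -/
def rSeq (lam0 : ℕ) (b β : ℝ) (n : ℕ) : ℝ := ((lamSeq lam0 b n : ℝ)) ^ (-β)

/-- `μ_{n+1} = (λ_n λ_{n+1})^{1/2}` -/
def muSeq (lam0 : ℕ) (b : ℝ) (n : ℕ) : ℝ :=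
  Real.sqrt ((lamSeq lam0 b n : ℝ) * (lamSeq lam0 b (n + 1) : ℝ))

/-- smooth Fourier cutoff `P_{≤μ}` associated to a bump `ψ` -/
def Pcut (ψ : ℝ × ℝ → ℝ) (μ : ℝ) : (ℝ × ℝ → ℂ) → (ℝ × ℝ → ℂ) :=
  Tmult fun k => ((ψ ((k.1 : ℝ) / μ, (k.2 : ℝ) / μ) : ℝ) : ℂ)

/-- bilinear multiplier with symbol the Fourier transform of a kernel `K ∈ L¹(ℝ²×ℝ²)` -/
def mOf (K : (ℝ × ℝ) × (ℝ × ℝ) → ℂ) (ξ η : ℝ × ℝ) : ℂ :=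
  ∫ z : (ℝ × ℝ) × (ℝ × ℝ),
    K z * Complex.exp (-Complex.I * ((ξ.1 * z.1.1 + ξ.2 * z.1.2 + η.1 * z.2.1 + η.2 * z.2.2 : ℝ) : ℂ))

/-- the bilinear multiplier operator associated to a kernel `K ∈ L¹(ℝ²×ℝ²)` -/
def Tbil (K : (ℝ × ℝ) × (ℝ × ℝ) → ℂ) (f g : ℝ × ℝ → ℂ) : ℝ × ℝ → ℂ :=
  fun x => ∑' k : Z2,
    (∑' k' : Z2, mOf K (toR k') (toR (k - k')) * fCoeff f k' * fCoeff g (k - k'))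
      * Complex.exp (Complex.I * (dotZ k x : ℝ))

/-- Fourier coefficients of the commutator `[R_j, φ]θ`, computed from those of `φ` and `θ` -/
def commCoeff (j : Fin 2) (φh c : Z2 → ℂ) (k : Z2) : ℂ :=
  ∑' k' : Z2, (rieszSym j k - rieszSym j k') * φh (k - k') * c k'


/-! ### Helper lemmas -/

/-- one-dimensional Fourier coefficient -/
def c1 (g : ℝ → ℂ) (n : ℤ) : ℂ :=
  (1 / (2 * Real.pi) : ℂ) * ∫ s in (-Real.pi)..Real.pi, g s * Complex.exp (-Complex.I * ((n * s : ℝ) : ℂ))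

lemma four1 (g : ℝ → ℂ) (hg : Continuous g) (hp : Function.Periodic g (2 * Real.pi))
    (hs : Summable fun n : ℤ => c1 g n) (t : ℝ) :
    HasSum (fun n : ℤ => c1 g n * Complex.exp (Complex.I * ((n * t : ℝ) : ℂ))) (g t) := by
  have : Fact (0 < 2 * Real.pi) := ⟨Real.two_pi_pos⟩
  have hpi : (Real.pi : ℂ) ≠ 0 := by exact_mod_cast Real.pi_ne_zero
  let f : C(AddCircle (2 * Real.pi), ℂ) :=
    ⟨hp.lift, continuous_coinduced_dom.mpr hg⟩
  have hf : ∀ s : ℝ, f (s : AddCircle (2 * Real.pi)) = g s := fun s => rfl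
  have hc : ∀ n, fourierCoeff f n = c1 g n := by
    intro n
    rw [fourierCoeff_eq_intervalIntegral f n (-Real.pi), c1]
    have : -Real.pi + 2 * Real.pi = Real.pi := by ring
    rw [this]
    simp only [hf, fourier_coe_apply, smul_eq_mul]
    rw [Complex.real_smul]
    congr 1
    · push_cast; rfl
    · apply intervalIntegral.integral_congr
      intro s _
      simp only
      rw [mul_comm]
      congr 2
      push_cast
      field_simp
  have hs' : Summable (fourierCoeff f) := by
    simpa only [funext hc] using hs
  have := has_pointwise_sum_fourier_series_of_summable hs' (t : AddCircle (2 * Real.pi))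
  rw [hf] at this
  convert! this using 2 with n
  rw [hc, fourier_coe_apply, smul_eq_mul]
  congr 2
  push_cast
  field_simp

lemma Q2_eq : Q2 = Set.Icc (-Real.pi) Real.pi ×ˢ Set.Icc (-Real.pi) Real.pi := by
  rw [Q2, Set.Icc_prod_Icc]

lemma isCompact_Q2 : IsCompact Q2 := isCompact_Icc

lemma integrableOn_Q2 {F : ℝ × ℝ → ℂ} (hF : Continuous F) : IntegrableOn F Q2 :=
  hF.continuousOn.integrableOn_compact isCompact_Q2

lemma neg_pi_le_pi : -Real.pi ≤ Real.pi := by linarith [Real.pi_pos]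

lemma int_Q2 {F : ℝ × ℝ → ℂ} (hF : Continuous F) :
    ∫ x in Q2, F x = ∫ s in (-Real.pi)..Real.pi, ∫ t in (-Real.pi)..Real.pi, F (s, t) := by
  have h := integrableOn_Q2 hF
  rw [Q2_eq] at h ⊢
  rw [Measure.volume_eq_prod] at h ⊢
  rw [setIntegral_prod _ h]
  simp only [intervalIntegral.integral_of_le neg_pi_le_pi, integral_Icc_eq_integral_Ioc]

lemma int_Q2' {F : ℝ × ℝ → ℂ} (hF : Continuous F) :
    ∫ x in Q2, F x = ∫ t in (-Real.pi)..Real.pi, ∫ s in (-Real.pi)..Real.pi, F (s, t) := by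
  have h : Continuous fun z : ℝ × ℝ => F z.swap := hF.comp continuous_swap
  have h2 := int_Q2 h
  simp only [Prod.swap_prod_mk] at h2
  rw [← h2, Q2_eq, Measure.volume_eq_prod]
  exact (setIntegral_prod_swap _ _ F).symm

lemma continuous_dotZ (k : Z2) : Continuous (dotZ k) := by
  unfold dotZ; fun_prop

/-- the two-dimensional inversion formula, given summability -/
lemma inv2 (f : ℝ × ℝ → ℂ) (hf : Continuous f) (hp : Periodic2 f)
    (hs : Summable fun k : Z2 => ‖fCoeff f k‖) (x : ℝ × ℝ) :
    HasSum (fun k : Z2 => fCoeff f k * Complex.exp (Complex.I * (dotZ k x : ℝ))) (f x) := by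
  have hpi : (Real.pi : ℂ) ≠ 0 := by exact_mod_cast Real.pi_ne_zero
  have hnexp : ∀ r : ℝ, ‖Complex.exp (Complex.I * (r : ℂ))‖ = 1 := by
    intro r; rw [mul_comm]; exact Complex.norm_exp_ofReal_mul_I r
  -- the partial Fourier coefficients
  let c : ℤ → ℝ → ℂ := fun m t => c1 (fun s => f (s, t)) m
  have hc_cont : ∀ m, Continuous (c m) := by
    intro m
    refine continuous_const.mul ?_
    apply intervalIntegral.continuous_parametric_intervalIntegral_of_continuous'
    fun_prop
  have hc_per : ∀ m, Function.Periodic (c m) (2 * Real.pi) := by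
    intro m t
    simp only [c]
    congr 1
    ext s
    exact (hp (s, t)).2
  have hcc : ∀ m n, c1 (c m) n = fCoeff f (m, n) := by
    intro m n
    rw [fCoeff, int_Q2' (by have := continuous_dotZ (m, n); fun_prop), c1]
    simp only [c, c1]
    rw [← intervalIntegral.integral_const_mul, ← intervalIntegral.integral_const_mul]
    apply intervalIntegral.integral_congr
    intro t _
    simp only
    rw [mul_assoc, ← intervalIntegral.integral_mul_const, ← mul_assoc,
      ← intervalIntegral.integral_const_mul, ← intervalIntegral.integral_const_mul]
    apply intervalIntegral.integral_congr
    intro s _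
    simp only [dotZ]
    rw [mul_assoc (f (s, t)), ← Complex.exp_add]
    have : -Complex.I * ((m * s : ℝ) : ℂ) + -Complex.I * ((n * t : ℝ) : ℂ)
      = -Complex.I * ((m * s + n * t : ℝ) : ℂ) := by push_cast; ring
    rw [this]
    ring
  have hsm : ∀ m : ℤ, Summable fun n : ℤ => ‖fCoeff f (m, n)‖ := hs.prod_factor
  have h1 : ∀ m : ℤ, ∀ t : ℝ, HasSum
      (fun n : ℤ => fCoeff f (m, n) * Complex.exp (Complex.I * ((n * t : ℝ) : ℂ))) (c m t) := by
    intro m t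
    have := four1 (c m) (hc_cont m) (hc_per m) (by simpa only [hcc] using (hsm m).of_norm) t
    simpa only [hcc] using this
  have hb : ∀ m t, ‖c m t‖ ≤ ∑' n : ℤ, ‖fCoeff f (m, n)‖ := by
    intro m t
    rw [← (h1 m t).tsum_eq]
    refine tsum_of_norm_bounded (hsm m).hasSum (fun n => ?_)
    rw [norm_mul, hnexp, mul_one]
  have hcs : ∀ t, Summable fun m => c m t := fun t =>
    Summable.of_norm_bounded hs.prod (fun m => hb m t)
  obtain ⟨s, t⟩ := x
  have h2 := four1 (fun s => f (s, t)) (by fun_prop) (fun s => (hp (s, t)).1) (hcs t) s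
  have hsum : Summable (fun k : Z2 => fCoeff f k * Complex.exp (Complex.I * (dotZ k (s, t) : ℝ))) := by
    refine Summable.of_norm_bounded hs (fun k => ?_)
    rw [norm_mul, hnexp, mul_one]
  have h3 := hsum.hasSum.prod_fiberwise
    (g := fun m : ℤ => c m t * Complex.exp (Complex.I * ((m * s : ℝ) : ℂ))) (by
      intro m
      convert! (h1 m t).mul_right (Complex.exp (Complex.I * ((m * s : ℝ) : ℂ))) using 2 with n
      rw [mul_assoc, ← Complex.exp_add]
      congr 2
      simp only [dotZ]
      push_cast; ring)
  have := h3.unique h2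
  rw [← this]
  exact hsum.hasSum

/-- the two unit directions -/
def dj (j : Fin 2) : ℝ × ℝ := if j = 0 then ((1 : ℝ), (0 : ℝ)) else ((0 : ℝ), (1 : ℝ))

def kj (j : Fin 2) (k : Z2) : ℝ := if j = 0 then (k.1 : ℝ) else (k.2 : ℝ)

lemma pd_smooth (j : Fin 2) {f : ℝ × ℝ → ℂ} (hf : ContDiff ℝ (⊤ : ℕ∞) f) :
    ContDiff ℝ (⊤ : ℕ∞) (pd j f) := by
  unfold pd dirD
  exact (hf.fderiv_right (m := (⊤ : ℕ∞)) (by simp)).clm_apply contDiff_const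

lemma fderiv_shift {f : ℝ × ℝ → ℂ} {v : ℝ × ℝ} (h : ∀ x, f (x + v) = f x) (x : ℝ × ℝ) :
    fderiv ℝ f (x + v) = fderiv ℝ f x := by
  rw [← fderiv_comp_add_right]
  congr 1
  ext y
  exact h y

lemma pd_per (j : Fin 2) {f : ℝ × ℝ → ℂ} (hf : Periodic2 f) : Periodic2 (pd j f) := by
  intro x
  have h1 : ∀ y, f (y + (2 * Real.pi, 0)) = f y := by
    intro y; have := (hf y).1; simpa [Prod.add_def] using this
  have h2 : ∀ y, f (y + (0, 2 * Real.pi)) = f y := by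
    intro y; have := (hf y).2; simpa [Prod.add_def] using this
  have e1 := fderiv_shift h1 x
  have e2 := fderiv_shift h2 x
  simp only [Prod.add_def, add_zero] at e1 e2
  exact ⟨by simp only [pd, dirD, e1], by simp only [pd, dirD, e2]⟩

lemma int_pd_zero (j : Fin 2) {F : ℝ × ℝ → ℂ} (hF : ContDiff ℝ (⊤ : ℕ∞) F) (hp : Periodic2 F) :
    ∫ x in Q2, pd j F x = 0 := by
  have hc : Continuous (pd j F) := (pd_smooth j hF).continuous
  have hd : Differentiable ℝ F := hF.differentiable (by simp)
  have hpi : -Real.pi + 2 * Real.pi = Real.pi := by ring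
  fin_cases j
  · rw [int_Q2' hc]
    have : ∀ t : ℝ, ∫ s in (-Real.pi)..Real.pi, pd 0 F (s, t) = 0 := by
      intro t
      have hder : ∀ s : ℝ, HasDerivAt (fun s => F (s, t)) (pd 0 F (s, t)) s := by
        intro s
        have h : HasDerivAt (fun s => F (s, t)) _ s := (hd (s, t)).hasFDerivAt.comp_hasDerivAt s
          ((hasDerivAt_id s).prodMk (hasDerivAt_const s t))
        simpa [pd, dirD] using h
      rw [intervalIntegral.integral_eq_sub_of_hasDerivAt (fun s _ => hder s)
        ((by fun_prop : Continuous fun s : ℝ => pd 0 F (s, t)).intervalIntegrable _ _)]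
      have := (hp (-Real.pi, t)).1
      simp only [hpi] at this
      rw [this, sub_self]
    simp [this]
  · rw [int_Q2 hc]
    have : ∀ s : ℝ, ∫ t in (-Real.pi)..Real.pi, pd 1 F (s, t) = 0 := by
      intro s
      have hder : ∀ t : ℝ, HasDerivAt (fun t => F (s, t)) (pd 1 F (s, t)) t := by
        intro t
        have h : HasDerivAt (fun t => F (s, t)) _ t := (hd (s, t)).hasFDerivAt.comp_hasDerivAt t
          ((hasDerivAt_const t s).prodMk (hasDerivAt_id t))
        simpa [pd, dirD] using h
      rw [intervalIntegral.integral_eq_sub_of_hasDerivAt (fun s _ => hder s)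
        ((by fun_prop : Continuous fun t : ℝ => pd 1 F (s, t)).intervalIntegrable _ _)]
      have := (hp (s, -Real.pi)).2
      simp only [hpi] at this
      rw [this, sub_self]
    simp [this]

lemma exp_per (k : ℤ) (s : ℝ) (w : ℂ) :
    Complex.exp (-Complex.I * ((k * (s + 2 * Real.pi) : ℝ) + w)) =
    Complex.exp (-Complex.I * ((k * s : ℝ) + w)) := by
  have : -Complex.I * ((k * (s + 2 * Real.pi) : ℝ) + w)
    = -Complex.I * ((k * s : ℝ) + w) + ((-k : ℤ) : ℂ) * (2 * Real.pi * Complex.I) := by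
    push_cast; ring
  rw [this, Complex.exp_add, Complex.exp_int_mul_two_pi_mul_I, mul_one]

lemma fCoeff_pd (j : Fin 2) {f : ℝ × ℝ → ℂ} (hf : ContDiff ℝ (⊤ : ℕ∞) f) (hp : Periodic2 f)
    (k : Z2) : fCoeff (pd j f) k = Complex.I * (kj j k : ℝ) * fCoeff f k := by
  let e : ℝ × ℝ → ℂ := fun x => Complex.exp (-Complex.I * (dotZ k x : ℝ))
  have hds : ContDiff ℝ (⊤ : ℕ∞) (dotZ k) := by unfold dotZ; fun_prop
  have hes : ContDiff ℝ (⊤ : ℕ∞) e := by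
    have : ContDiff ℝ (⊤ : ℕ∞) (fun x => ((dotZ k x : ℝ) : ℂ)) :=
      Complex.ofRealCLM.contDiff.comp hds
    exact (contDiff_const.mul this).cexp
  have hFs : ContDiff ℝ (⊤ : ℕ∞) (fun x => f x * e x) := hf.mul hes
  have hFp : Periodic2 (fun x => f x * e x) := by
    intro x
    refine ⟨?_, ?_⟩
    · simp only [e, (hp x).1, dotZ, Complex.ofReal_add]
      rw [exp_per]
    · simp only [e, (hp x).2, dotZ, Complex.ofReal_add]
      rw [add_comm, exp_per, add_comm]
  have h0 := int_pd_zero j hFs hFp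
  have hpde : ∀ x, pd j e x = -Complex.I * (kj j k : ℝ) * e x := by
    intro x
    have hdd : HasFDerivAt (dotZ k)
        ((k.1 : ℝ) • ContinuousLinearMap.fst ℝ ℝ ℝ + (k.2 : ℝ) • ContinuousLinearMap.snd ℝ ℝ ℝ) x := by
      unfold dotZ
      exact (hasFDerivAt_fst.const_mul _).add (hasFDerivAt_snd.const_mul _)
    have h2 : HasFDerivAt (fun x => ((dotZ k x : ℝ) : ℂ)) _ x :=
      Complex.ofRealCLM.hasFDerivAt.comp x hdd
    have h3 := (h2.const_mul (-Complex.I)).cexp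
    have h4 : fderiv ℝ e x = _ := h3.fderiv
    simp only [pd, dirD, h4]
    fin_cases j <;> simp [kj, e] <;> ring
  have hpdF : ∀ x, pd j (fun x => f x * e x) x
      = pd j f x * e x - Complex.I * (kj j k : ℝ) * (f x * e x) := by
    intro x
    have hfd := (hf.differentiable (by simp)) x
    have hed := (hes.differentiable (by simp)) x
    have h1 : fderiv ℝ (fun x => f x * e x) x = f x • fderiv ℝ e x + e x • fderiv ℝ f x :=
      fderiv_fun_mul hfd hed
    have h2 := hpde x
    simp only [pd, dirD] at h2 ⊢
    rw [h1]
    simp only [add_apply, smul_apply, smul_eq_mul]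
    rw [h2]
    ring
  simp only [hpdF] at h0
  have i1 := integrableOn_Q2 (F := fun x => pd j f x * e x)
    ((pd_smooth j hf).continuous.mul hes.continuous)
  have i2 := integrableOn_Q2 (F := fun x => f x * e x) hFs.continuous
  rw [integral_sub i1 (i2.const_mul _), integral_const_mul, sub_eq_zero] at h0
  simp only [fCoeff]
  rw [show (∫ x in Q2, pd j f x * Complex.exp (-Complex.I * (dotZ k x : ℝ)))
    = Complex.I * (kj j k : ℝ) * ∫ x in Q2, f x * e x from h0]
  ring

lemma norm_e (r : ℝ) : ‖Complex.exp (Complex.I * (r : ℂ))‖ = 1 := by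
  rw [mul_comm]; exact Complex.norm_exp_ofReal_mul_I r

lemma norm_e' (r : ℝ) : ‖Complex.exp (-Complex.I * (r : ℂ))‖ = 1 := by
  have := norm_e (-r)
  rw [← this]; congr 2; push_cast; ring

lemma fCoeff_bdd {f : ℝ × ℝ → ℂ} (hf : Continuous f) : ∃ C, ∀ k, ‖fCoeff f k‖ ≤ C := by
  obtain ⟨M, hM⟩ := isCompact_Q2.exists_bound_of_continuousOn hf.continuousOn
  refine ⟨‖(1 / (2 * Real.pi) ^ 2 : ℂ)‖ * (M * volume.real Q2), fun k => ?_⟩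
  rw [fCoeff, norm_mul]
  gcongr
  apply norm_setIntegral_le_of_norm_le_const isCompact_Q2.measure_lt_top
  intro x hx
  rw [norm_mul, norm_e', mul_one]
  exact hM x hx

lemma fCoeff_sub {f g : ℝ × ℝ → ℂ} (hf : Continuous f) (hg : Continuous g) (k : Z2) :
    fCoeff (fun x => f x - g x) k = fCoeff f k - fCoeff g k := by
  have hd := continuous_dotZ k
  simp only [fCoeff, sub_mul]
  rw [integral_sub (integrableOn_Q2 (by fun_prop)) (integrableOn_Q2 (by fun_prop)), mul_sub]

lemma summ_u : Summable fun m : ℤ => 1 / (1 + (m : ℝ) ^ 2) := by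
  have h := ((Real.summable_one_div_int_add_rpow (1 / 2) 2).mpr (by norm_num)).mul_left 2
  refine Summable.of_nonneg_of_le (fun m => by positivity) (fun m => ?_) h
  have hne : (m : ℝ) + 1 / 2 ≠ 0 := by
    intro h
    have h2 : (2 * m + 1 : ℝ) = 0 := by linarith
    have h3 : (2 * m + 1 : ℤ) = 0 := by exact_mod_cast h2
    omega
  have hpos : 0 < ((m : ℝ) + 1 / 2) ^ 2 := by positivity
  rw [Real.rpow_ofNat, sq_abs, mul_one_div, div_le_div_iff₀ (by positivity) hpos]
  nlinarith [sq_nonneg ((m : ℝ) - 1 / 2)]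

lemma fCoeff_summable {f : ℝ × ℝ → ℂ} (hf : ContDiff ℝ (⊤ : ℕ∞) f) (hp : Periodic2 f) :
    Summable fun k : Z2 => ‖fCoeff f k‖ := by
  have step : ∀ (j : Fin 2) (g : ℝ × ℝ → ℂ), ContDiff ℝ (⊤ : ℕ∞) g → Periodic2 g →
      ∃ G : ℝ × ℝ → ℂ, ContDiff ℝ (⊤ : ℕ∞) G ∧ Periodic2 G ∧
        ∀ k, fCoeff G k = ((1 + (kj j k) ^ 2 : ℝ) : ℂ) * fCoeff g k := by
    intro j g hg hgp
    have s1 := pd_smooth j hg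
    have s2 := pd_smooth j s1
    have p1 := pd_per j hgp
    have p2 := pd_per j p1
    refine ⟨fun x => g x - pd j (pd j g) x, hg.sub s2, ?_, ?_⟩
    · intro x
      exact ⟨by simp only [(hgp x).1, (p2 x).1], by simp only [(hgp x).2, (p2 x).2]⟩
    · intro k
      rw [fCoeff_sub hg.continuous s2.continuous, fCoeff_pd j s1 p1, fCoeff_pd j hg hgp]
      have := Complex.I_mul_I
      push_cast
      linear_combination (-(kj j k : ℂ) ^ 2 * fCoeff g k) * this
  obtain ⟨G, hG, hGp, hGk⟩ := step 0 f hf hp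
  obtain ⟨H, hH, -, hHk⟩ := step 1 G hG hGp
  obtain ⟨C, hC⟩ := fCoeff_bdd hH.continuous
  have hs := (summ_u.mul_of_nonneg summ_u (fun m => by positivity) (fun m => by positivity)).mul_left C
  refine Summable.of_nonneg_of_le (fun k => norm_nonneg _) (fun k => ?_) hs
  have h := hC k
  rw [hHk, hGk, norm_mul, norm_mul, Complex.norm_of_nonneg (by positivity),
    Complex.norm_of_nonneg (by positivity)] at h
  simp only [kj, if_true, one_ne_zero, if_false] at h
  rw [div_mul_div_comm, one_mul, mul_one_div, le_div_iff₀ (by positivity)]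
  linarith

lemma knorm_neg (k : Z2) : knorm (-k) = knorm k := by
  simp [knorm]

lemma knorm_nonneg (k : Z2) : 0 ≤ knorm k := Real.sqrt_nonneg _

lemma knorm_le (k : Z2) : knorm k ≤ |(k.1 : ℝ)| + |(k.2 : ℝ)| := by
  rw [knorm]
  apply Real.sqrt_le_iff.mpr
  refine ⟨by positivity, ?_⟩
  nlinarith [abs_nonneg (k.1 : ℝ), abs_nonneg (k.2 : ℝ), sq_abs (k.1 : ℝ), sq_abs (k.2 : ℝ),
    mul_nonneg (abs_nonneg (k.1 : ℝ)) (abs_nonneg (k.2 : ℝ))]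

lemma knorm_add_le (κ k : Z2) :
    knorm (κ + k) ≤ (|(κ.1 : ℝ)| + |(κ.2 : ℝ)|) + |(k.1 : ℝ)| + |(k.2 : ℝ)| := by
  refine (knorm_le _).trans ?_
  have h1 := abs_add_le (κ.1 : ℝ) (k.1 : ℝ)
  have h2 := abs_add_le (κ.2 : ℝ) (k.2 : ℝ)
  simp only [Prod.fst_add, Prod.snd_add, Int.cast_add]
  linarith

lemma knorm_sub_le (κ k : Z2) :
    knorm (κ - k) ≤ (|(κ.1 : ℝ)| + |(κ.2 : ℝ)|) + |(k.1 : ℝ)| + |(k.2 : ℝ)| := by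
  have := knorm_add_le κ (-k)
  rw [← sub_eq_add_neg] at this
  simpa using this

lemma fCoeff_cos {a : ℝ × ℝ → ℂ} (ha : Continuous a) (κ k : Z2) :
    fCoeff (fun y => a y * ((Real.cos (dotZ κ y) : ℝ) : ℂ)) k
      = (fCoeff a (k - κ) + fCoeff a (k + κ)) / 2 := by
  have h1 := continuous_dotZ (k - κ)
  have h2 := continuous_dotZ (k + κ)
  simp only [fCoeff]
  rw [← mul_add, ← integral_add (integrableOn_Q2 (by fun_prop)) (integrableOn_Q2 (by fun_prop)),
    mul_div_assoc, ← integral_div]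
  congr 2
  ext y
  rw [Complex.ofReal_cos, Complex.cos]
  have e1 : Complex.exp (-Complex.I * (dotZ (k - κ) y : ℝ))
      = Complex.exp ((dotZ κ y : ℝ) * Complex.I) * Complex.exp (-Complex.I * (dotZ k y : ℝ)) := by
    rw [← Complex.exp_add]; congr 1; simp only [dotZ]; push_cast [Prod.fst_sub, Prod.snd_sub]; ring
  have e2 : Complex.exp (-Complex.I * (dotZ (k + κ) y : ℝ))
      = Complex.exp (-(dotZ κ y : ℝ) * Complex.I) * Complex.exp (-Complex.I * (dotZ k y : ℝ)) := by
    rw [← Complex.exp_add]; congr 1; simp only [dotZ]; push_cast [Prod.fst_add, Prod.snd_add]; ring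
  rw [e1, e2]
  ring

/-- Leibniz Lemma 3.1: for `g(x) = a(x) cos(λ l·x)` with `|l| = 1`, `λl ∈ ℤ²`,
`Λg = λg + (l·∇a) sin(λl·x) + (T¹_{λl}a) cos(λl·x) + (T²_{λl}a) sin(λl·x)`. -/
theorem stmt3 (l : ℝ × ℝ) (hl : l.1 ^ 2 + l.2 ^ 2 = 1) (lam : ℝ) (hlam : 0 < lam)
    (κ : Z2) (hκ1 : (κ.1 : ℝ) = lam * l.1) (hκ2 : (κ.2 : ℝ) = lam * l.2)
    (a : ℝ × ℝ → ℂ) (ha : ContDiff ℝ (⊤ : ℕ∞) a) (hap : Periodic2 a) (har : RealValued a)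
    (x : ℝ × ℝ) :
    Lam 1 (fun y => a y * ((Real.cos (lam * (l.1 * y.1 + l.2 * y.2)) : ℝ) : ℂ)) x
      = (lam : ℂ) * (a x * ((Real.cos (lam * (l.1 * x.1 + l.2 * x.2)) : ℝ) : ℂ))
        + (l.1 * pd 0 a x + l.2 * pd 1 a x)
            * ((Real.sin (lam * (l.1 * x.1 + l.2 * x.2)) : ℝ) : ℂ)
        + T1op κ lam a x * ((Real.cos (lam * (l.1 * x.1 + l.2 * x.2)) : ℝ) : ℂ)
        + T2op κ l a x * ((Real.sin (lam * (l.1 * x.1 + l.2 * x.2)) : ℝ) : ℂ) := by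
  have hθ : ∀ y : ℝ × ℝ, lam * (l.1 * y.1 + l.2 * y.2) = dotZ κ y := by
    intro y; rw [dotZ, hκ1, hκ2]; ring
  simp only [hθ]
  set c : Z2 → ℂ := fun k => fCoeff a k * Complex.exp (Complex.I * (dotZ k x : ℝ)) with hcdef
  have S := fCoeff_summable ha hap
  have S0 := fCoeff_summable (pd_smooth 0 ha) (pd_per 0 hap)
  have S1 := fCoeff_summable (pd_smooth 1 ha) (pd_per 1 hap)
  have hA : HasSum c (a x) := inv2 a ha.continuous hap S x
  have hD0 : HasSum (fun k : Z2 => Complex.I * (k.1 : ℂ) * c k) (pd 0 a x) := by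
    have := inv2 _ (pd_smooth 0 ha).continuous (pd_per 0 hap) S0 x
    simpa [fCoeff_pd 0 ha hap, kj, hcdef, mul_assoc] using this
  have hD1 : HasSum (fun k : Z2 => Complex.I * (k.2 : ℂ) * c k) (pd 1 a x) := by
    have := inv2 _ (pd_smooth 1 ha).continuous (pd_per 1 hap) S1 x
    simpa [fCoeff_pd 1 ha hap, kj, hcdef, mul_assoc] using this
  have n0 : ∀ k : Z2, ‖fCoeff (pd 0 a) k‖ = |(k.1 : ℝ)| * ‖fCoeff a k‖ := by
    intro k; rw [fCoeff_pd 0 ha hap]; simp [kj]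
  have n1 : ∀ k : Z2, ‖fCoeff (pd 1 a) k‖ = |(k.2 : ℝ)| * ‖fCoeff a k‖ := by
    intro k; rw [fCoeff_pd 1 ha hap]; simp [kj]
  have hsum : ∀ p : Z2 → ℝ, (∀ k, 0 ≤ p k) →
      (∀ k : Z2, p k ≤ (|(κ.1 : ℝ)| + |(κ.2 : ℝ)|) + |(k.1 : ℝ)| + |(k.2 : ℝ)|) →
      Summable fun k => (p k : ℂ) * c k := by
    intro p hp0 hp
    refine Summable.of_norm_bounded
      (((S.mul_left (|(κ.1 : ℝ)| + |(κ.2 : ℝ)|)).add S0).add S1) (fun k => ?_)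
    simp only [hcdef]
    rw [norm_mul, norm_mul, norm_e, mul_one, Complex.norm_of_nonneg (hp0 k), n0, n1,
      ← add_mul, ← add_mul]
    exact mul_le_mul_of_nonneg_right (hp k) (norm_nonneg _)
  obtain ⟨SP, hP⟩ := hsum (fun k => knorm (κ + k)) (fun k => knorm_nonneg _) (knorm_add_le κ)
  obtain ⟨SQ, hQ⟩ := hsum (fun k => knorm (κ - k)) (fun k => knorm_nonneg _) (knorm_sub_le κ)
  have hT1 : T1op κ lam a x = (SP + SQ) / 2 - lam * a x := by
    refine HasSum.tsum_eq ?_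
    convert! ((hP.add hQ).div_const 2).sub (hA.mul_left (lam : ℂ)) using 2 with k
    simp only [hcdef]
    push_cast
    ring
  have hT2 : T2op κ l a x
      = Complex.I * ((SP - SQ) / 2) - (l.1 * pd 0 a x + l.2 * pd 1 a x) := by
    refine HasSum.tsum_eq ?_
    convert! (((hP.sub hQ).div_const 2).mul_left Complex.I).sub
      ((hD0.mul_left (l.1 : ℂ)).add (hD1.mul_left (l.2 : ℂ))) using 2 with k
    simp only [hcdef]
    push_cast
    ring
  have hL : Lam 1 (fun y => a y * ((Real.cos (dotZ κ y) : ℝ) : ℂ)) x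
      = (SP * Complex.exp ((dotZ κ x : ℝ) * Complex.I)
          + SQ * Complex.exp (-(dotZ κ x : ℝ) * Complex.I)) / 2 := by
    have g1 : HasSum (fun k : Z2 => (knorm k : ℂ) * fCoeff a (k - κ)
        * Complex.exp (Complex.I * (dotZ k x : ℝ)))
        (SP * Complex.exp ((dotZ κ x : ℝ) * Complex.I)) := by
      rw [← (Equiv.addRight κ).hasSum_iff]
      convert! hP.mul_right (Complex.exp ((dotZ κ x : ℝ) * Complex.I)) using 2 with k
      simp only [Function.comp, Equiv.coe_addRight, add_sub_cancel_right, hcdef]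
      rw [add_comm k κ, mul_assoc, mul_assoc, mul_assoc, ← Complex.exp_add]
      congr 3
      simp only [dotZ]; push_cast [Prod.fst_add, Prod.snd_add]; ring
    have g2 : HasSum (fun k : Z2 => (knorm k : ℂ) * fCoeff a (k + κ)
        * Complex.exp (Complex.I * (dotZ k x : ℝ)))
        (SQ * Complex.exp (-(dotZ κ x : ℝ) * Complex.I)) := by
      rw [← (Equiv.subRight κ).hasSum_iff]
      convert! hQ.mul_right (Complex.exp (-(dotZ κ x : ℝ) * Complex.I)) using 2 with k
      simp only [Function.comp, Equiv.subRight_apply, sub_add_cancel, hcdef]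
      rw [← knorm_neg (k - κ), neg_sub, mul_assoc, mul_assoc, mul_assoc, ← Complex.exp_add]
      congr 3
      simp only [dotZ]; push_cast [Prod.fst_sub, Prod.snd_sub]; ring
    refine HasSum.tsum_eq ?_
    convert! (g1.add g2).div_const 2 using 2 with k
    rw [fCoeff_cos ha.continuous]
    beta_reduce
    have : (if k = 0 then 0 else ((knorm k ^ (1 : ℝ) : ℝ) : ℂ)) = (knorm k : ℂ) := by
      split_ifs with h
      · subst h; simp [knorm]
      · rw [Real.rpow_one]
    rw [this]
    ring
  rw [hL, hT1, hT2, Complex.ofReal_cos, Complex.ofReal_sin, neg_mul, ← neg_mul,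
    Complex.exp_mul_I, Complex.exp_mul_I, Complex.cos_neg, Complex.sin_neg]
  ring

end
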